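/- Diagonal-formula elimination: if the nested sequent Γ{[◇A⊥, A]} is cut-free provable in the nested sequent calculus for GL, then Γ{[A]} is provable using cuts only on the formula A. -/

import Mathlib

/-- Formulas of GL in negation normal form. -/
inductive Formula : Type where
  | pos : ℕ → Formula
  | neg : ℕ → Formula
  | and : Formula → Formula → Formula
  | or  : Formula → Formula → Formula
  | box : Formula → Formula
  | dia : Formula → Formula
deriving DecidableEq

/-- Negation `A⊥` of a formula, via De Morgan duality. -/
def Formula.negate : Formula → Formula
  | .pos a => .neg a
  | .neg a => .pos a
  | .and A B => .or A.negate B.negate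
  | .or A B => .and A.negate B.negate
  | .box A => .dia A.negate
  | .dia A => .box A.negate

/-- An element of a nested sequent: a formula or a nested (bracketed) sequent. -/
inductive SeqElem : Type where
  | fml : Formula → SeqElem
  | nest : List SeqElem → SeqElem

/-- A nested sequent. -/
abbrev Sequent := List SeqElem

/-- Unary contexts: a nested sequent with a single hole. -/
inductive Ctx : Type where
  | hole : Sequent → Ctx
  | nest : Sequent → Ctx → Ctx

/-- Fill the hole of a context with a sequent. -/
def Ctx.fill : Ctx → Sequent → Sequent
  | .hole Δ, Γ => Δ ++ Γ
  | .nest Δ c, Γ => .nest (c.fill Γ) :: Δ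

/-- Depth of a context: number of brackets surrounding the hole. -/
def Ctx.depth : Ctx → ℕ
  | .hole _ => 0
  | .nest _ c => c.depth + 1

/-- Equivalence of nested sequents up to (deep) exchange. -/
inductive SeqEquiv : Sequent → Sequent → Prop where
  | nil : SeqEquiv [] []
  | cons {e : SeqElem} {Γ Δ : Sequent} : SeqEquiv Γ Δ → SeqEquiv (e :: Γ) (e :: Δ)
  | consNest {Γ' Δ' Γ Δ : Sequent} :
      SeqEquiv Γ' Δ' → SeqEquiv Γ Δ → SeqEquiv (.nest Γ' :: Γ) (.nest Δ' :: Δ)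
  | swap (a b : SeqElem) (Γ : Sequent) : SeqEquiv (a :: b :: Γ) (b :: a :: Γ)
  | trans {Γ Δ Θ : Sequent} : SeqEquiv Γ Δ → SeqEquiv Δ Θ → SeqEquiv Γ Θ

/-- `DerivH n Γ`: `Γ` has a cut-free derivation of height at most `n`. -/
inductive DerivH : ℕ → Sequent → Prop where
  | id (n : ℕ) (c : Ctx) (a : ℕ) :
      DerivH n (c.fill [.fml (.pos a), .fml (.neg a)])
  | and {n : ℕ} {c : Ctx} {A B : Formula} :
      DerivH n (c.fill [.fml A]) → DerivH n (c.fill [.fml B]) →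
      DerivH (n + 1) (c.fill [.fml (.and A B)])
  | or {n : ℕ} {c : Ctx} {A B : Formula} :
      DerivH n (c.fill [.fml A, .fml B]) →
      DerivH (n + 1) (c.fill [.fml (.or A B)])
  | box {n : ℕ} {c : Ctx} {A : Formula} :
      DerivH n (c.fill [.nest [.fml (.dia A.negate), .fml A]]) →
      DerivH (n + 1) (c.fill [.fml (.box A)])
  | dia {n : ℕ} (c d : Ctx) {A : Formula} :
      0 < d.depth →
      DerivH n (c.fill (d.fill [.fml A] ++ [.fml (.dia A)])) →
      DerivH (n + 1) (c.fill (d.fill [] ++ [.fml (.dia A)]))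
  | exch {n : ℕ} {Γ Δ : Sequent} : SeqEquiv Γ Δ → DerivH n Γ → DerivH n Δ
  | up {n : ℕ} {Γ : Sequent} : DerivH n Γ → DerivH (n + 1) Γ

/-- Derivability where cut is permitted on formulas satisfying `P`. -/
inductive DerivWith (P : Formula → Prop) : Sequent → Prop where
  | id (c : Ctx) (a : ℕ) :
      DerivWith P (c.fill [.fml (.pos a), .fml (.neg a)])
  | and {c : Ctx} {A B : Formula} :
      DerivWith P (c.fill [.fml A]) → DerivWith P (c.fill [.fml B]) →
      DerivWith P (c.fill [.fml (.and A B)])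
  | or {c : Ctx} {A B : Formula} :
      DerivWith P (c.fill [.fml A, .fml B]) →
      DerivWith P (c.fill [.fml (.or A B)])
  | box {c : Ctx} {A : Formula} :
      DerivWith P (c.fill [.nest [.fml (.dia A.negate), .fml A]]) →
      DerivWith P (c.fill [.fml (.box A)])
  | dia (c d : Ctx) {A : Formula} :
      0 < d.depth →
      DerivWith P (c.fill (d.fill [.fml A] ++ [.fml (.dia A)])) →
      DerivWith P (c.fill (d.fill [] ++ [.fml (.dia A)]))
  | cut {c : Ctx} {A : Formula} : P A →
      DerivWith P (c.fill [.fml A]) → DerivWith P (c.fill [.fml A.negate]) →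
      DerivWith P (c.fill [])
  | exch {Γ Δ : Sequent} : SeqEquiv Γ Δ → DerivWith P Γ → DerivWith P Δ

/-- Cut-free derivability. -/
abbrev Deriv : Sequent → Prop := DerivWith (fun _ => False)

/-! The proof is semantic: the calculus is sound and cut-free complete for converse well-founded
transitive trees, and on such trees the diagonal formula may be dropped. -/

theorem Formula.negate_negate (A : Formula) : A.negate.negate = A := by
  induction A <;> simp_all [Formula.negate]

/-! ### Exchange and contexts -/

namespace SeqEquiv

theorem refl : ∀ Γ : Sequent, SeqEquiv Γ Γ
  | [] => .nil
  | _ :: Γ => .cons (refl Γ)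

theorem symm {Γ Δ : Sequent} (h : SeqEquiv Γ Δ) : SeqEquiv Δ Γ := by
  induction h with
  | nil => exact .nil
  | cons _ ih => exact .cons ih
  | consNest _ _ ih₁ ih₂ => exact .consNest ih₁ ih₂
  | swap a b Γ => exact .swap b a Γ
  | trans _ _ ih₁ ih₂ => exact .trans ih₂ ih₁

theorem of_perm {Γ Δ : Sequent} (h : Γ.Perm Δ) : SeqEquiv Γ Δ := by
  induction h with
  | nil => exact .nil
  | cons _ _ ih => exact .cons ih
  | swap a b Γ => exact .swap b a Γ
  | trans _ _ ih₁ ih₂ => exact .trans ih₁ ih₂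

theorem append_left {Γ Δ : Sequent} (h : SeqEquiv Γ Δ) :
    ∀ Θ : Sequent, SeqEquiv (Θ ++ Γ) (Θ ++ Δ)
  | [] => h
  | _ :: Θ => .cons (h.append_left Θ)

theorem fill {Γ Δ : Sequent} (h : SeqEquiv Γ Δ) (c : Ctx) :
    SeqEquiv (c.fill Γ) (c.fill Δ) := by
  induction c with
  | hole Θ => exact h.append_left Θ
  | nest Θ c ih => exact .consNest ih (refl Θ)

end SeqEquiv

namespace Ctx

/-- Composition of contexts; it fills to the nested filling up to exchange. -/
def comp : Ctx → Ctx → Ctx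
  | .hole Δ, .hole Γ => .hole (Δ ++ Γ)
  | .hole Δ, .nest Γ e => .nest (Δ ++ Γ) e
  | .nest Δ c, e => .nest Δ (c.comp e)

theorem comp_fill (c e : Ctx) (Γ : Sequent) :
    SeqEquiv ((c.comp e).fill Γ) (c.fill (e.fill Γ)) := by
  induction c with
  | hole Δ =>
    cases e with
    | hole Θ => simpa [comp, fill] using SeqEquiv.refl _
    | nest Θ e => exact .of_perm (by simpa [comp, fill] using List.perm_middle.symm)
  | nest Δ c ih => exact .consNest ih (.refl Δ)

/-- The bodies of the diamond formulas lying strictly above the hole. -/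
def ambient : Ctx → Set Formula
  | .hole _ => ∅
  | .nest Δ c => {A | .fml (.dia A) ∈ Δ} ∪ c.ambient

theorem mem_ambient_comp_nest (c : Ctx) (Γ Δ : Sequent) {A : Formula}
    (h : A ∈ c.ambient ∨ .fml (.dia A) ∈ Γ) :
    A ∈ (c.comp (.nest Γ (.hole Δ))).ambient := by
  induction c with
  | hole Θ => simp_all [comp, ambient]
  | nest Θ c ih =>
    simp only [ambient, Set.mem_union, Set.mem_ofPred_eq, comp] at h ⊢
    tauto

end Ctx

/-! ### Derived rules -/

namespace DerivWith

variable {P : Formula → Prop}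

theorem perm {c : Ctx} {Γ Δ : Sequent} (h : Γ.Perm Δ) (hd : DerivWith P (c.fill Γ)) :
    DerivWith P (c.fill Δ) :=
  .exch ((SeqEquiv.of_perm h).fill c) hd

theorem comp_iff (c e : Ctx) {Γ : Sequent} :
    DerivWith P ((c.comp e).fill Γ) ↔ DerivWith P (c.fill (e.fill Γ)) :=
  ⟨.exch (c.comp_fill e Γ), .exch (c.comp_fill e Γ).symm⟩

theorem id_append (c : Ctx) (Γ : Sequent) (a : ℕ) :
    DerivWith P (c.fill (Γ ++ [.fml (.pos a), .fml (.neg a)])) :=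
  (comp_iff c (.hole Γ)).1 (.id _ a)

theorem and_cons {c : Ctx} {Γ : Sequent} {A B : Formula}
    (hA : DerivWith P (c.fill (.fml A :: Γ))) (hB : DerivWith P (c.fill (.fml B :: Γ))) :
    DerivWith P (c.fill (.fml (.and A B) :: Γ)) :=
  perm (List.perm_append_singleton _ Γ) <| (comp_iff c (.hole Γ)).1 <| .and
    ((comp_iff c (.hole Γ)).2 (perm (List.perm_append_singleton _ Γ).symm hA))
    ((comp_iff c (.hole Γ)).2 (perm (List.perm_append_singleton _ Γ).symm hB))

theorem or_cons {c : Ctx} {Γ : Sequent} {A B : Formula}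
    (h : DerivWith P (c.fill (.fml A :: .fml B :: Γ))) :
    DerivWith P (c.fill (.fml (.or A B) :: Γ)) :=
  perm (List.perm_append_singleton _ Γ) <| (comp_iff c (.hole Γ)).1 <| .or
    ((comp_iff c (.hole Γ)).2 (perm (List.perm_append_comm (l₁ := [_, _])) h))

theorem box_cons {c : Ctx} {Γ : Sequent} {A : Formula}
    (h : DerivWith P (c.fill (.nest [.fml (.dia A.negate), .fml A] :: Γ))) :
    DerivWith P (c.fill (.fml (.box A) :: Γ)) :=
  perm (List.perm_append_singleton _ Γ) <| (comp_iff c (.hole Γ)).1 <| .box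
    ((comp_iff c (.hole Γ)).2 (perm (List.perm_append_singleton _ Γ).symm h))

theorem dia_ambient_aux {A : Formula} {Γ : Sequent} (c : Ctx) :
    ∀ e : Ctx, A ∈ c.ambient → DerivWith P (e.fill (c.fill (.fml A :: Γ))) →
      DerivWith P (e.fill (c.fill Γ)) := by
  induction c with
  | hole Δ => intro e hA; simp [Ctx.ambient] at hA
  | nest Δ c ih =>
    intro e hA h
    rcases hA with hA | hA
    · obtain ⟨Θ, hΘ⟩ : ∃ Θ : Sequent, Δ.Perm (Θ ++ [.fml (.dia A)]) := by
        obtain ⟨s, t, rfl⟩ := List.append_of_mem hA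
        exact ⟨s ++ t, List.perm_middle.trans (List.perm_append_singleton _ _).symm⟩
      have key : ∀ Ξ : Sequent,
          SeqEquiv ((Ctx.nest Θ (c.comp (.hole Γ))).fill Ξ ++ [.fml (.dia A)])
            ((Ctx.nest Δ c).fill (Γ ++ Ξ)) := fun Ξ =>
        .consNest (c.comp_fill _ Ξ) (.of_perm hΘ.symm)
      have hΓ := (key []).fill e
      rw [List.append_nil] at hΓ
      refine .exch hΓ (.dia e _ (Nat.succ_pos _) (.exch ((key _).symm.fill e) (.exch ?_ h)))
      exact SeqEquiv.fill (.fill (.of_perm (List.perm_append_singleton _ Γ).symm) _) e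
    · exact (comp_iff e (.nest Δ (.hole []))).1 (ih _ hA ((comp_iff e (.nest Δ (.hole []))).2 h))

/-- The diamond rule, with the diamond formula found anywhere above the hole. -/
theorem dia_ambient {A : Formula} {Γ : Sequent} {c : Ctx} (hA : A ∈ c.ambient)
    (h : DerivWith P (c.fill (.fml A :: Γ))) : DerivWith P (c.fill Γ) :=
  dia_ambient_aux c (.hole []) hA h

theorem dia_ambient_list {Γ : Sequent} {c : Ctx} (L : List Formula)
    (hL : ∀ A ∈ L, A ∈ c.ambient) (h : DerivWith P (c.fill (L.map .fml ++ Γ))) :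
    DerivWith P (c.fill Γ) := by
  induction L with
  | nil => exact h
  | cons A L ih =>
    exact ih (fun B hB => hL B (by simp [hB])) (dia_ambient (hL A (by simp)) h)

theorem id_negate (A : Formula) :
    ∀ (c : Ctx) (Γ : Sequent), DerivWith P (c.fill (.fml A :: .fml A.negate :: Γ)) := by
  have box_case (A : Formula)
      (ih : ∀ (c : Ctx) (Γ : Sequent), DerivWith P (c.fill (.fml A :: .fml A.negate :: Γ)))
      (c : Ctx) (Γ : Sequent) :
      DerivWith P (c.fill (.fml (.box A) :: .fml (.dia A.negate) :: Γ)) := by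
    refine box_cons <| (comp_iff c (.nest (.fml (.dia A.negate) :: Γ) (.hole []))).1 ?_
    refine dia_ambient (A := A.negate) (Ctx.mem_ambient_comp_nest _ _ _ (by simp)) ?_
    refine perm ?_ (ih _ [.fml (.dia A.negate)])
    exact (List.Perm.swap _ _ _).trans (.cons _ (.swap _ _ _))
  induction A with
  | pos a => exact fun c Γ => perm List.perm_append_comm (id_append c Γ a)
  | neg a =>
    exact fun c Γ => perm (List.perm_append_comm.trans (.swap _ _ _)) (id_append c Γ a)
  | and A B ihA ihB =>
    intro c Γ
    refine and_cons (perm (.swap _ _ _) (or_cons ?_)) (perm (.swap _ _ _) (or_cons ?_))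
    · refine perm ?_ (ihA c (.fml B.negate :: Γ))
      exact (List.Perm.swap _ _ _).trans (.cons _ (.swap _ _ _))
    · refine perm ?_ (ihB c (.fml A.negate :: Γ))
      exact (List.perm_middle (l₁ := [_, _]) (l₂ := Γ)).trans (.cons _ (.swap _ _ _))
  | or A B ihA ihB =>
    intro c Γ
    refine perm (.swap _ _ _) (and_cons (perm (.swap _ _ _) (or_cons ?_))
      (perm (.swap _ _ _) (or_cons ?_)))
    · exact perm (.cons _ (.swap _ _ _)) (ihA c (.fml B :: Γ))
    · refine perm ?_ (ihB c (.fml A :: Γ))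
      exact List.perm_middle (l₁ := [_, _]) (l₂ := Γ)
  | box A ih => exact box_case A ih
  | dia A ih =>
    intro c Γ
    have := box_case A.negate
      (fun c Γ => by rw [A.negate_negate]; exact perm (.swap _ _ _) (ih c Γ)) c Γ
    rw [A.negate_negate] at this
    exact perm (.swap _ _ _) this

end DerivWith

/-! ### KripkeTree models -/

/-- Well-founded tree models; the accessibility relation is `KripkeTree.Below`. -/
inductive KripkeTree : Type 1 where
  | node (v : ℕ → Prop) {ι : Type} (f : ι → KripkeTree) : KripkeTree

namespace KripkeTree

/-- The valuation at the root. -/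
def val : KripkeTree → ℕ → Prop
  | .node v _ => v

/-- `Below s t`: `s` is a proper subtree of `t`. -/
inductive Below : KripkeTree → KripkeTree → Prop where
  | child (v : ℕ → Prop) {ι : Type} (f : ι → KripkeTree) (i : ι) : Below (f i) (.node v f)
  | step (v : ℕ → Prop) {ι : Type} (f : ι → KripkeTree) (i : ι) {s : KripkeTree} :
      Below s (f i) → Below s (.node v f)

theorem Below.trans {r s t : KripkeTree} (h₁ : Below r s) (h₂ : Below s t) : Below r t := by
  induction h₂ with
  | child v f i => exact .step v f i h₁
  | step v f i _ ih => exact .step v f i (ih h₁)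

theorem below_node {v : ℕ → Prop} {ι : Type} {f : ι → KripkeTree} {s : KripkeTree}
    (h : Below s (.node v f)) : ∃ i, s = f i ∨ Below s (f i) := by
  cases h with
  | child _ _ i => exact ⟨i, .inl rfl⟩
  | step _ _ i h => exact ⟨i, .inr h⟩

/-- Truth of a formula at the root of a tree. -/
def Forces : KripkeTree → Formula → Prop
  | t, .pos a => t.val a
  | t, .neg a => ¬ t.val a
  | t, .and A B => t.Forces A ∧ t.Forces B
  | t, .or A B => t.Forces A ∨ t.Forces B
  | t, .box A => ∀ s, Below s t → s.Forces A
  | t, .dia A => ∃ s, Below s t ∧ s.Forces A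

theorem forces_negate (A : Formula) (t : KripkeTree) : t.Forces A.negate ↔ ¬ t.Forces A := by
  induction A generalizing t <;> simp_all [Formula.negate, Forces]; tauto

theorem below_wellFounded : WellFounded Below := by
  refine ⟨fun t => ?_⟩
  induction t with
  | node v f ih =>
    refine ⟨_, fun s hs => ?_⟩
    obtain ⟨i, rfl | hi⟩ := below_node hs
    · exact ih i
    · exact (ih i).inv hi

/-- If `□A` fails, then `A` fails at a successor all of whose successors satisfy `A`. -/
theorem exists_last {A : Formula} {s t : KripkeTree} (hst : Below s t) (h : ¬ s.Forces A) :
    ∃ r, Below r t ∧ ¬ r.Forces A ∧ ¬ r.Forces (.dia A.negate) := by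
  obtain ⟨r, ⟨hr, hrA⟩, hmin⟩ :=
    below_wellFounded.has_min {r | Below r t ∧ ¬ r.Forces A} ⟨s, hst, h⟩
  refine ⟨r, hr, hrA, ?_⟩
  rintro ⟨q, hq, hqA⟩
  exact hmin q ⟨hq.trans hr, (forces_negate A q).1 hqA⟩ hq

/-- `t.RefutesElem e`: the formula interpretation of `e` is false at the root of `t`. -/
inductive RefutesElem : KripkeTree → SeqElem → Prop where
  | fml {t : KripkeTree} {A : Formula} : ¬ t.Forces A → RefutesElem t (.fml A)
  | nest {s t : KripkeTree} {Γ : Sequent} : Below s t → (∀ e ∈ Γ, RefutesElem s e) →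
      RefutesElem t (.nest Γ)

/-- `t.Refutes Γ`: the formula interpretation of `Γ` is false at the root of `t`. -/
abbrev Refutes (t : KripkeTree) (Γ : Sequent) : Prop :=
  ∀ e ∈ Γ, t.RefutesElem e

theorem refutesElem_fml {t : KripkeTree} {A : Formula} :
    t.RefutesElem (.fml A) ↔ ¬ t.Forces A :=
  ⟨fun h => by cases h; assumption, .fml⟩

theorem refutesElem_nest {t : KripkeTree} {Γ : Sequent} :
    t.RefutesElem (.nest Γ) ↔ ∃ s, Below s t ∧ s.Refutes Γ :=
  ⟨fun h => by cases h with | nest hs h => exact ⟨_, hs, h⟩, fun ⟨_, hs, h⟩ => .nest hs h⟩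

theorem refutes_fill {c : Ctx} {Γ : Sequent} {t : KripkeTree} (h : t.Refutes (c.fill Γ)) :
    ∃ s, (c.depth = 0 ∧ s = t ∨ Below s t) ∧ s.Refutes Γ ∧
      ∀ Γ', s.Refutes Γ' → t.Refutes (c.fill Γ') := by
  induction c generalizing t with
  | hole Δ =>
    simp only [Ctx.fill, Refutes, List.forall_mem_append, Ctx.depth] at h ⊢
    exact ⟨t, by simp, h.2, fun _ h' => ⟨h.1, h'⟩⟩
  | nest Δ c ih =>
    simp only [Ctx.fill, Refutes, List.forall_mem_cons, refutesElem_nest, Ctx.depth] at h ⊢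
    obtain ⟨⟨s, hst, hs⟩, hΔ⟩ := h
    obtain ⟨r, hrs, hr, hfill⟩ := ih hs
    refine ⟨r, .inr ?_, hr, fun Γ' h' => ⟨⟨s, hst, hfill Γ' h'⟩, hΔ⟩⟩
    obtain ⟨-, rfl⟩ | hrs := hrs
    · exact hst
    · exact hrs.trans hst

theorem refutes_congr {Γ Δ : Sequent} (h : SeqEquiv Γ Δ) (t : KripkeTree) :
    t.Refutes Γ ↔ t.Refutes Δ := by
  induction h generalizing t with
  | nil => rfl
  | cons _ ih => simp only [Refutes, List.forall_mem_cons] at ih ⊢; rw [ih]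
  | consNest _ _ ih₁ ih₂ =>
    simp only [Refutes, List.forall_mem_cons, refutesElem_nest] at ih₁ ih₂ ⊢
    simp only [ih₁, ih₂]
  | swap a b Γ => simp only [Refutes, List.forall_mem_cons]; tauto
  | trans _ _ ih₁ ih₂ => exact (ih₁ t).trans (ih₂ t)

/-- Removing a diagonal formula preserves refutability. -/
theorem refutes_diagonal {c : Ctx} {A : Formula} {t : KripkeTree}
    (h : t.Refutes (c.fill [.nest [.fml A]])) :
    t.Refutes (c.fill [.nest [.fml (.dia A.negate), .fml A]]) := by
  obtain ⟨s, -, hs, hfill⟩ := refutes_fill h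
  apply hfill
  simp only [Refutes, List.forall_mem_singleton, List.forall_mem_cons, refutesElem_nest,
    refutesElem_fml] at hs ⊢
  obtain ⟨r, hr, hA⟩ := hs
  obtain ⟨q, hq, hqA, hqd⟩ := exists_last hr hA
  exact ⟨q, hq, hqd, hqA⟩

theorem not_refutes_of_deriv {Γ : Sequent} (h : Deriv Γ) (t : KripkeTree) :
    ¬ t.Refutes Γ := by
  induction h generalizing t with
  | id c a =>
    intro h
    obtain ⟨s, -, hs, -⟩ := refutes_fill h
    simp [Refutes, refutesElem_fml, Forces] at hs
  | @and c A B _ _ ihA ihB =>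
    intro h
    obtain ⟨s, -, hs, hfill⟩ := refutes_fill h
    simp only [Refutes, List.forall_mem_singleton, refutesElem_fml, Forces, not_and_or] at hs
    obtain hs | hs := hs
    · exact ihA t (hfill _ (by simpa [Refutes, refutesElem_fml] using hs))
    · exact ihB t (hfill _ (by simpa [Refutes, refutesElem_fml] using hs))
  | @or c A B _ ih =>
    intro h
    obtain ⟨s, -, hs, hfill⟩ := refutes_fill h
    exact ih t (hfill _ (by simpa [Refutes, refutesElem_fml, Forces] using hs))
  | @box c A _ ih =>
    intro h
    obtain ⟨s, -, hs, hfill⟩ := refutes_fill h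
    refine ih t (refutes_diagonal (hfill _ ?_))
    simpa [Refutes, refutesElem_fml, refutesElem_nest, Forces] using hs
  | @dia c d A hd _ ih =>
    intro h
    obtain ⟨s, -, hs, hfill⟩ := refutes_fill h
    rw [Refutes, List.forall_mem_append] at hs
    obtain ⟨r, hr, -, hfill'⟩ := refutes_fill hs.1
    refine ih t (hfill _ ?_)
    rw [Refutes, List.forall_mem_append]
    refine ⟨hfill' _ ?_, hs.2⟩
    simp only [List.forall_mem_singleton, refutesElem_fml] at hs ⊢
    exact fun hA => hs.2 ⟨r, hr.resolve_left (by omega), hA⟩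
  | cut hP => exact hP.elim
  | exch e _ ih => exact fun h => ih t ((refutes_congr e t).2 h)

end KripkeTree

/-! ### Cut-free completeness -/

/-- A set of formulas closed under subformulas, containing the diagonal formulas of its boxes. -/
structure SubformulaClosed (S : Finset Formula) : Prop where
  and {A B : Formula} : .and A B ∈ S → A ∈ S ∧ B ∈ S
  or {A B : Formula} : .or A B ∈ S → A ∈ S ∧ B ∈ S
  box {A : Formula} : .box A ∈ S → A ∈ S ∧ .dia A.negate ∈ S
  dia {A : Formula} : .dia A ∈ S → A ∈ S

namespace SubformulaClosed

theorem union {S T : Finset Formula} (hS : SubformulaClosed S) (hT : SubformulaClosed T) :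
    SubformulaClosed (S ∪ T) := by
  constructor <;> simp only [Finset.mem_union]
  · rintro A B (h | h)
    · exact ⟨.inl (hS.and h).1, .inl (hS.and h).2⟩
    · exact ⟨.inr (hT.and h).1, .inr (hT.and h).2⟩
  · rintro A B (h | h)
    · exact ⟨.inl (hS.or h).1, .inl (hS.or h).2⟩
    · exact ⟨.inr (hT.or h).1, .inr (hT.or h).2⟩
  · rintro A (h | h)
    · exact ⟨.inl (hS.box h).1, .inl (hS.box h).2⟩
    · exact ⟨.inr (hT.box h).1, .inr (hT.box h).2⟩
  · rintro A (h | h)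
    · exact .inl (hS.dia h)
    · exact .inr (hT.dia h)

theorem exists_mem (A : Formula) :
    ∃ S, SubformulaClosed S ∧ A ∈ S ∧ A.negate ∈ S := by
  have modal (A : Formula) (S : Finset Formula) (hS : SubformulaClosed S) (hA : A ∈ S)
      (hA' : A.negate ∈ S) :
      SubformulaClosed (insert (.box A) (insert (.dia A.negate) S)) := by
    constructor <;> simp only [Finset.mem_insert] <;> intros <;>
      grind [hS.and, hS.or, hS.box, hS.dia]
  have binary (A B C D : Formula) (S : Finset Formula) (hS : SubformulaClosed S) (hA : A ∈ S)
      (hB : B ∈ S) (hC : C ∈ S) (hD : D ∈ S) :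
      SubformulaClosed (insert (.and A B) (insert (.or C D) S)) := by
    constructor <;> simp only [Finset.mem_insert] <;> intros <;>
      grind [hS.and, hS.or, hS.box, hS.dia]
  have literal (a : ℕ) : SubformulaClosed {.pos a, .neg a} := by
    constructor <;> simp
  induction A with
  | pos a => exact ⟨_, literal a, by simp [Formula.negate]⟩
  | neg a => exact ⟨_, literal a, by simp [Formula.negate]⟩
  | and A B ihA ihB =>
    obtain ⟨S, hS, hA, hA'⟩ := ihA
    obtain ⟨T, hT, hB, hB'⟩ := ihB
    exact ⟨_, binary A B A.negate B.negate _ (hS.union hT) (by simp [hA]) (by simp [hB])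
      (by simp [hA']) (by simp [hB']), by simp [Formula.negate]⟩
  | or A B ihA ihB =>
    obtain ⟨S, hS, hA, hA'⟩ := ihA
    obtain ⟨T, hT, hB, hB'⟩ := ihB
    exact ⟨_, binary A.negate B.negate A B _ (hS.union hT) (by simp [hA']) (by simp [hB'])
      (by simp [hA]) (by simp [hB]), by simp [Formula.negate]⟩
  | box A ih =>
    obtain ⟨S, hS, hA, hA'⟩ := ih
    exact ⟨_, modal A S hS hA hA', by simp [Formula.negate]⟩
  | dia A ih =>
    obtain ⟨S, hS, hA, hA'⟩ := ih
    exact ⟨_, modal A.negate S hS hA' (by rwa [A.negate_negate]),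
      by simp [Formula.negate, A.negate_negate]⟩

end SubformulaClosed

/-- All formulas occurring in the sequent element belong to `S`. -/
inductive SeqElem.Within (S : Finset Formula) : SeqElem → Prop where
  | fml {A : Formula} : A ∈ S → Within S (.fml A)
  | nest {Γ : List SeqElem} : (∀ e ∈ Γ, Within S e) → Within S (.nest Γ)

namespace Sequent

/-- All formulas occurring in the sequent belong to `S`. -/
abbrev Within (S : Finset Formula) (Γ : Sequent) : Prop :=
  ∀ e ∈ Γ, e.Within S

end Sequent

theorem SeqElem.Within.mono {S T : Finset Formula} (hST : S ⊆ T) {e : SeqElem}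
    (h : e.Within S) : e.Within T := by
  induction h with
  | fml h => exact .fml (hST h)
  | nest _ ih => exact .nest ih

theorem SeqElem.within_fml {S : Finset Formula} {A : Formula} :
    (SeqElem.fml A).Within S ↔ A ∈ S :=
  ⟨fun h => by cases h; assumption, .fml⟩

theorem SeqElem.within_nest {S : Finset Formula} {Γ : Sequent} :
    (SeqElem.nest Γ).Within S ↔ Sequent.Within S Γ :=
  ⟨fun h => by cases h; assumption, .nest⟩

theorem Sequent.exists_within (Γ : Sequent) :
    ∃ S, SubformulaClosed S ∧ Sequent.Within S Γ := by
  refine SeqElem.rec_1 (motive_1 := fun e => ∃ S, SubformulaClosed S ∧ e.Within S)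
    (motive_2 := fun Γ => ∃ S, SubformulaClosed S ∧ Sequent.Within S Γ) ?_ ?_ ?_ ?_ Γ
  · intro A
    obtain ⟨S, hS, hA, -⟩ := SubformulaClosed.exists_mem A
    exact ⟨S, hS, .fml hA⟩
  · rintro Γ ⟨S, hS, h⟩
    exact ⟨S, hS, .nest h⟩
  · exact ⟨∅, by constructor <;> simp, fun _ h => absurd h List.not_mem_nil⟩
  · rintro e Γ ⟨S, hS, he⟩ ⟨T, hT, hΓ⟩
    refine ⟨S ∪ T, hS.union hT, List.forall_mem_cons.2 ⟨he.mono Finset.subset_union_left, ?_⟩⟩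
    exact fun e' he' => (hΓ e' he').mono Finset.subset_union_right

/-- The bodies of the diamond formulas at the root of a sequent. -/
def Sequent.diamonds (Γ : Sequent) : List Formula :=
  Γ.filterMap fun
    | .fml (.dia A) => some A
    | _ => none

theorem Sequent.mem_diamonds {Γ : Sequent} {A : Formula} :
    A ∈ Sequent.diamonds Γ ↔ .fml (.dia A) ∈ Γ := by
  simp only [Sequent.diamonds, List.mem_filterMap]
  constructor
  · rintro ⟨e, he, h⟩
    split at h
    · cases h; exact he
    · cases h
  · exact fun h => ⟨_, h, rfl⟩

/-- The bracketed sequents of `Γ`, together with those produced by unfolding its boxes. -/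
def Sequent.Child (Γ Δ : Sequent) : Prop :=
  .nest Δ ∈ Γ ∨ ∃ B, .fml (.box B) ∈ Γ ∧ Δ = [.fml (.dia B.negate), .fml B]

theorem Sequent.exists_perm_cons {Γ : Sequent} {e : SeqElem} (h : e ∈ Γ) :
    ∃ Θ : Sequent, Γ.Perm (e :: Θ) := by
  obtain ⟨s, t, rfl⟩ := List.append_of_mem h
  exact ⟨s ++ t, List.perm_middle⟩

/-- Derivability in every context that supplies the diamonds `◇A` for `A ∈ L`. -/
def DerivUnder (P : Formula → Prop) (L : List Formula) (Γ : Sequent) : Prop :=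
  ∀ c : Ctx, (∀ A ∈ L, A ∈ c.ambient) → DerivWith P (c.fill Γ)

/-- Some tree refutes `Γ` and falsifies the formulas in `L` everywhere except perhaps
at the root. -/
def RefutableBelow (L : List Formula) (Γ : Sequent) : Prop :=
  ∃ t : KripkeTree, t.Refutes Γ ∧ ∀ s : KripkeTree, s.Below t → ∀ A ∈ L, ¬ s.Forces A

/-- Some tree refutes `Γ` and falsifies the formulas in `L` everywhere. -/
def RefutableUnder (L : List Formula) (Γ : Sequent) : Prop :=
  ∃ t : KripkeTree, t.Refutes Γ ∧ ∀ s : KripkeTree, s = t ∨ s.Below t → ∀ A ∈ L, ¬ s.Forces A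

theorem RefutableBelow.under {L : List Formula} {Γ : Sequent}
    (h : RefutableBelow L (L.map .fml ++ Γ)) : RefutableUnder L Γ := by
  obtain ⟨t, ht, hL⟩ := h
  rw [KripkeTree.Refutes, List.forall_mem_append] at ht
  refine ⟨t, ht.2, ?_⟩
  rintro s (rfl | hs) A hA
  · exact KripkeTree.refutesElem_fml.1 (ht.1 _ (List.mem_map_of_mem hA))
  · exact hL s hs A hA

theorem RefutableBelow.perm {L : List Formula} {Γ Δ : Sequent} (h : Γ.Perm Δ)
    (hΔ : RefutableBelow L Δ) : RefutableBelow L Γ := by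
  obtain ⟨t, ht, hL⟩ := hΔ
  exact ⟨t, fun e he => ht e (h.subset he), hL⟩

namespace DerivUnder

variable {P : Formula → Prop} {L : List Formula}

theorem perm {Γ Δ : Sequent} (h : Γ.Perm Δ) (hΔ : DerivUnder P L Δ) : DerivUnder P L Γ :=
  fun c hc => (hΔ c hc).perm h.symm

theorem of_append {Γ : Sequent} (h : DerivUnder P L (L.map .fml ++ Γ)) : DerivUnder P L Γ :=
  fun c hc => .dia_ambient_list L hc (h c hc)

theorem of_child {Γ Δ : Sequent} (hΔ : Sequent.Child Γ Δ)
    (h : DerivUnder P (L ++ Sequent.diamonds Γ) Δ) : DerivUnder P L Γ := by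
  intro c hc
  have key (Θ : Sequent) (hΘ : ∀ A, .fml (.dia A) ∈ Γ → .fml (.dia A) ∈ Θ) :
      DerivWith P (c.fill (.nest Δ :: Θ)) := by
    refine (DerivWith.comp_iff c (.nest Θ (.hole []))).1 (h _ fun A hA => ?_)
    apply Ctx.mem_ambient_comp_nest
    rw [List.mem_append, Sequent.mem_diamonds] at hA
    exact hA.imp (hc A) (hΘ A)
  obtain hΔ | ⟨B, hB, rfl⟩ := hΔ
  · obtain ⟨Θ, hΘ⟩ := Sequent.exists_perm_cons hΔ
    refine .perm hΘ.symm (key Θ fun A hA => ?_)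
    simpa using hΘ.subset hA
  · obtain ⟨Θ, hΘ⟩ := Sequent.exists_perm_cons hB
    refine .perm hΘ.symm (.box_cons (key Θ fun A hA => ?_))
    simpa using hΘ.subset hA

end DerivUnder

/-- A sequent without conjunctions, disjunctions and clashing literals at its root is refutable as soon as
all its children are. -/
theorem refutableBelow_of_child {L : List Formula} {Γ : Sequent}
    (hand : ∀ A B, .fml (.and A B) ∉ Γ) (hor : ∀ A B, .fml (.or A B) ∉ Γ)
    (hid : ∀ a, .fml (.pos a) ∈ Γ → .fml (.neg a) ∉ Γ)
    (h : ∀ Δ, Sequent.Child Γ Δ → RefutableUnder (L ++ Sequent.diamonds Γ) Δ) :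
    RefutableBelow L Γ := by
  choose f hf hL using h
  let t : KripkeTree := .node (fun a => .fml (.neg a) ∈ Γ)
    (fun i : {Δ // Sequent.Child Γ Δ} => f i.1 i.2)
  have hbelow (s : KripkeTree) (hs : s.Below t) :
      ∀ A ∈ L ++ Sequent.diamonds Γ, ¬ s.Forces A := by
    obtain ⟨i, hi⟩ := KripkeTree.below_node hs
    exact hL i.1 i.2 s hi
  have hchild (Δ : Sequent) (hΔ : Sequent.Child Γ Δ) : ∃ s : KripkeTree, s.Below t ∧ s.Refutes Δ :=
    ⟨_, .child _ _ ⟨Δ, hΔ⟩, hf Δ hΔ⟩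
  refine ⟨t, fun e he => ?_, fun s hs A hA => hbelow s hs A (List.mem_append_left _ hA)⟩
  match e with
  | .nest Δ => exact KripkeTree.refutesElem_nest.2 (hchild Δ (.inl he))
  | .fml (.pos a) => exact .fml (hid a he)
  | .fml (.neg a) => exact .fml (not_not.2 he)
  | .fml (.and A B) => exact absurd he (hand A B)
  | .fml (.or A B) => exact absurd he (hor A B)
  | .fml (.box B) =>
    obtain ⟨s, hs, hB⟩ := hchild _ (.inr ⟨B, he, rfl⟩)
    exact .fml fun hf => KripkeTree.refutesElem_fml.1 (hB (.fml B) (by simp)) (hf s hs)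
  | .fml (.dia A) =>
    refine .fml ?_
    rintro ⟨s, hs, hA⟩
    exact hbelow s hs A (List.mem_append_right _ (Sequent.mem_diamonds.2 he)) hA

/-- The size of the propositional part of a formula. -/
def Formula.weight : Formula → ℕ
  | .and A B => A.weight + B.weight + 1
  | .or A B => A.weight + B.weight + 1
  | _ => 0

/-- The total propositional size of the formulas at the root of a sequent. -/
def Sequent.weight (Γ : Sequent) : ℕ :=
  (Γ.map fun
    | .fml A => A.weight
    | .nest _ => 0).sum

theorem Sequent.weight_append (Γ Δ : Sequent) :
    Sequent.weight (Γ ++ Δ) = Sequent.weight Γ + Sequent.weight Δ := by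
  simp [Sequent.weight]

theorem Sequent.weight_fml_cons (A : Formula) (Γ : Sequent) :
    Sequent.weight (.fml A :: Γ) = A.weight + Sequent.weight Γ := by
  simp [Sequent.weight]

theorem Sequent.weight_perm {Γ Δ : Sequent} (h : Γ.Perm Δ) :
    Sequent.weight Γ = Sequent.weight Δ :=
  (h.map _).sum_eq

open Classical in
/-- The formulas of `S` that are not available as bodies of diamonds above or at the root
of `Γ`. -/
noncomputable def unavailable (S : Finset Formula) (L : List Formula) (Γ : Sequent) :
    Finset Formula :=
  {A ∈ S | A ∉ L ∧ .fml (.dia A) ∉ Γ}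

theorem mem_unavailable {S : Finset Formula} {L : List Formula} {Γ : Sequent} {A : Formula} :
    A ∈ unavailable S L Γ ↔ A ∈ S ∧ A ∉ L ∧ .fml (.dia A) ∉ Γ := by
  simp [unavailable]

theorem derivUnder_or_refutableBelow_of_child {P : Formula → Prop} {S : Finset Formula}
    (hS : SubformulaClosed S) {L : List Formula} {Γ : Sequent} (hΓ : Sequent.Within S Γ)
    (hchild : ∀ Γ', Sequent.Within S Γ' → unavailable S L Γ' ⊆ unavailable S L Γ →
      (∀ Δ, .nest Δ ∈ Γ' → .nest Δ ∈ Γ) → ∀ Δ, Sequent.Child Γ' Δ →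
      DerivUnder P (L ++ Sequent.diamonds Γ') Δ ∨ RefutableUnder (L ++ Sequent.diamonds Γ') Δ) :
    DerivUnder P L Γ ∨ RefutableBelow L Γ := by
  induction hn : Sequent.weight Γ using Nat.strong_induction_on generalizing Γ with
  | _ n ih =>
  have step (C : Formula) (l : List Formula) (Θ : Sequent) (hΘ : Γ.Perm (.fml C :: Θ))
      (hC : ∀ A, C ≠ .dia A) (hl : ∀ A ∈ l, A ∈ S)
      (hw : Sequent.weight (l.map .fml) < C.weight) :
      DerivUnder P L (l.map .fml ++ Θ) ∨ RefutableBelow L (l.map .fml ++ Θ) := by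
    have hmem (e : SeqElem) : e ∈ Γ ↔ e = .fml C ∨ e ∈ Θ := by rw [hΘ.mem_iff, List.mem_cons]
    refine ih (Sequent.weight (l.map .fml ++ Θ)) ?_ ?_ ?_ rfl
    · rw [← hn, Sequent.weight_perm hΘ, Sequent.weight_append, Sequent.weight_fml_cons]
      omega
    · rw [Sequent.Within, List.forall_mem_append]
      refine ⟨?_, fun e he => hΓ e ((hmem e).2 (.inr he))⟩
      simpa using fun A hA => SeqElem.Within.fml (hl A hA)
    · intro Γ' hΓ' hsub hnest
      refine hchild Γ' hΓ' (hsub.trans fun A => ?_) fun Δ hΔ => (hmem _).2 (.inr ?_)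
      · simp only [mem_unavailable, hmem, List.mem_append, not_or]
        refine fun h => ⟨h.1, h.2.1, fun h' => ?_, h.2.2.2⟩
        exact hC A (SeqElem.fml.inj h').symm
      · simpa using hnest Δ hΔ
  by_cases hand : ∃ A B, .fml (.and A B) ∈ Γ
  · obtain ⟨A, B, hAB⟩ := hand
    obtain ⟨Θ, hΘ⟩ := Sequent.exists_perm_cons hAB
    have hmem := hS.and (SeqElem.within_fml.1 (hΓ _ hAB))
    have stepA := step _ [A] Θ hΘ (by simp) (by simpa using hmem.1)
      (by simp [Sequent.weight, Formula.weight])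
    have stepB := step _ [B] Θ hΘ (by simp) (by simpa using hmem.2)
      (by simp [Sequent.weight, Formula.weight])
    obtain hA | ⟨t, ht, hL⟩ := stepA
    · obtain hB | ⟨t, ht, hL⟩ := stepB
      · exact .inl (.perm hΘ fun c hc => .and_cons (hA c hc) (hB c hc))
      · refine .inr (.perm hΘ ⟨t, ?_, hL⟩)
        simp_all [KripkeTree.Refutes, KripkeTree.refutesElem_fml, KripkeTree.Forces]
    · refine .inr (.perm hΘ ⟨t, ?_, hL⟩)
      simp_all [KripkeTree.Refutes, KripkeTree.refutesElem_fml, KripkeTree.Forces]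
  by_cases hor : ∃ A B, .fml (.or A B) ∈ Γ
  · obtain ⟨A, B, hAB⟩ := hor
    obtain ⟨Θ, hΘ⟩ := Sequent.exists_perm_cons hAB
    have hmem := hS.or (SeqElem.within_fml.1 (hΓ _ hAB))
    obtain hd | ⟨t, ht, hL⟩ := step _ [A, B] Θ hΘ (by simp) (by simpa using hmem)
      (by simp [Sequent.weight, Formula.weight])
    · exact .inl (.perm hΘ fun c hc => .or_cons (hd c hc))
    · refine .inr (.perm hΘ ⟨t, ?_, hL⟩)
      simp_all [KripkeTree.Refutes, KripkeTree.refutesElem_fml, KripkeTree.Forces]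
  by_cases hid : ∃ a, .fml (.pos a) ∈ Γ ∧ .fml (.neg a) ∈ Γ
  · obtain ⟨a, hp, hn⟩ := hid
    obtain ⟨Θ, hΘ⟩ := Sequent.exists_perm_cons hp
    obtain ⟨Ξ, hΞ⟩ := Sequent.exists_perm_cons (by simpa using hΘ.subset hn : .fml (.neg a) ∈ Θ)
    exact .inl (.perm (hΘ.trans (.cons _ hΞ)) fun c _ => .id_negate (.pos a) c Ξ)
  by_cases hder : ∃ Δ, Sequent.Child Γ Δ ∧ DerivUnder P (L ++ Sequent.diamonds Γ) Δ
  · obtain ⟨Δ, hΔ, h⟩ := hder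
    exact .inl (.of_child hΔ h)
  push Not at hand hor hid hder
  exact .inr (refutableBelow_of_child hand hor hid fun Δ hΔ =>
    (hchild Γ hΓ subset_rfl (fun _ h => h) Δ hΔ).resolve_left (hder Δ hΔ))

theorem derivUnder_or_refutableUnder {P : Formula → Prop} {S : Finset Formula}
    (hS : SubformulaClosed S) (L : List Formula) (hL : ∀ A ∈ L, A ∈ S) (Γ : Sequent)
    (hΓ : Sequent.Within S Γ) : DerivUnder P L Γ ∨ RefutableUnder L Γ := by
  induction hk : (unavailable S L Γ).card using Nat.strong_induction_on generalizing L Γ with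
  | _ k ihk =>
  replace hk : (unavailable S L Γ).card ≤ k := hk.le
  induction hm : sizeOf Γ using Nat.strong_induction_on generalizing L Γ with
  | _ m ihm =>
  refine (derivUnder_or_refutableBelow_of_child hS (Γ := L.map .fml ++ Γ) ?_ ?_).imp
    DerivUnder.of_append RefutableBelow.under
  · rw [Sequent.Within, List.forall_mem_append]
    exact ⟨by simpa using fun A hA => SeqElem.Within.fml (hL A hA), hΓ⟩
  intro Γ' hΓ' hsub hnest Δ hΔ
  replace hsub : unavailable S L Γ' ⊆ unavailable S L Γ := hsub.trans fun A => by
    simp only [mem_unavailable, List.mem_append, not_or]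
    tauto
  have hL' : ∀ A ∈ L ++ Sequent.diamonds Γ', A ∈ S := by
    intro A hA
    rw [List.mem_append, Sequent.mem_diamonds] at hA
    exact hA.elim (hL A) fun h => hS.dia (SeqElem.within_fml.1 (hΓ' _ h))
  have hsub' : unavailable S (L ++ Sequent.diamonds Γ') Δ ⊆ unavailable S L Γ' := fun A => by
    simp only [mem_unavailable, List.mem_append, Sequent.mem_diamonds, not_or]
    tauto
  obtain hΔ | ⟨B, hB, rfl⟩ := hΔ
  · have hΔΓ : .nest Δ ∈ Γ := by simpa using hnest Δ hΔ
    refine ihm (sizeOf Δ) ?_ _ hL' Δ (SeqElem.within_nest.1 (hΓ _ hΔΓ))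
      ((Finset.card_le_card (hsub'.trans hsub)).trans hk) rfl
    have := List.sizeOf_lt_of_mem hΔΓ
    simp only [SeqElem.nest.sizeOf_spec] at this
    omega
  · by_cases hmem : B.negate ∈ L ++ Sequent.diamonds Γ'
    · refine .inl fun c hc => .dia_ambient (hc _ hmem) (.perm ?_ (.id_negate B c
        [.fml (.dia B.negate)]))
      exact (List.Perm.swap _ _ _).trans (.cons _ (.swap _ _ _))
    · have hBS := hS.box (SeqElem.within_fml.1 (hΓ' _ hB))
      refine ihk _ ?_ _ hL' _ ?_ rfl
      · refine (Finset.card_lt_card ?_).trans_le ((Finset.card_le_card hsub).trans hk)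
        refine Finset.ssubset_iff_of_subset hsub' |>.2 ⟨B.negate, ?_, ?_⟩
        · rw [List.mem_append, Sequent.mem_diamonds, not_or] at hmem
          exact mem_unavailable.2 ⟨hS.dia hBS.2, hmem⟩
        · simp [mem_unavailable]
      · simpa [Sequent.Within, SeqElem.within_fml] using hBS.symm

/-- diagonal-formula elimination. -/
theorem diagonal_formula_elimination (c : Ctx) (A : Formula)
    (h : Deriv (c.fill [.nest [.fml (.dia A.negate), .fml A]])) :
    DerivWith (· = A) (c.fill [.nest [.fml A]]) := by
  obtain ⟨S, hS, hc⟩ := Sequent.exists_within (c.fill [.nest [.fml A]])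
  obtain hd | ⟨t, ht, -⟩ :=
    derivUnder_or_refutableUnder (P := (· = A)) hS [] (by simp) _ hc
  · exact hd (.hole []) (by simp)
  · exact absurd (KripkeTree.refutes_diagonal ht) (KripkeTree.not_refutes_of_deriv h t)
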